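/- arXiv:1104.4651 — 3 statements merged into one kernel-verified Lean document; each statement's English description precedes it below -/
import Mathlib

section
/- (Summability of Schwartz families.) Let v : ℝᵐ → (𝓢ₙ →L[ℂ] ℂ) be a Schwartz family, and let T : 𝓢ₙ →ₗ[ℂ] 𝓢ₘ be a linear map such that (T φ)(p) = v(p)(φ) for all φ ∈ 𝓢ₙ and p ∈ ℝᵐ (the operator generated by v). Then v is summable with respect to every tempered distribution: for every continuous linear functional a : 𝓢ₘ →L[ℂ] ℂ, the linear functional 𝓢ₙ → ℂ, φ ↦ a(T φ), is continuous, i.e., is a tempered distribution on ℝⁿ. -/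
/-- The Schwartz space `𝓢(ℝⁿ, ℂ)`. -/
abbrev Sch (n : ℕ) : Type := SchwartzMap (EuclideanSpace ℝ (Fin n)) ℂ

/-- A family `v : ℝᵐ → 𝓢ₙ'` of tempered distributions is a Schwartz family if the image
`p ↦ v p φ` of every test function `φ` is (given by) a Schwartz function on `ℝᵐ`. -/
def IsSchwartzFamily {n m : ℕ} (v : EuclideanSpace ℝ (Fin m) → (Sch n →L[ℂ] ℂ)) : Prop :=
  ∀ φ : Sch n, ∃ ψ : Sch m, ∀ p, ψ p = v p φ

/-!
The Schwartz space `𝓢(ℝⁿ, ℂ)` is complete and metrizable, hence barrelled, so every lower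
semicontinuous seminorm on it is continuous. If each evaluation `φ ↦ (T φ)(p)` is continuous, then
so is `φ ↦ (∂ₕ (T φ))(p)`, as a pointwise limit of difference quotients (Banach–Steinhaus), and
hence so are all `φ ↦ Dⁿ(T φ)(p)(h₁, …, hₙ)`. The Schwartz seminorms of `T φ` are suprema of
absolute values of such functionals of `φ`; they are therefore lower semicontinuous, hence
continuous, and `T` itself is continuous.
-/

open Filter Topology Uniformity
open scoped SchwartzMap LineDeriv

section TaylorSeries

variable {𝕜 : Type*} [NontriviallyNormedField 𝕜] [IsRCLikeNormedField 𝕜]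
  {E : Type*} [NormedAddCommGroup E] [NormedSpace 𝕜 E]
  {F : Type*} [NormedAddCommGroup F] [NormedSpace 𝕜 F]

theorem hasFTaylorSeriesUpTo_of_tendstoLocallyUniformly {ι : Type*} {l : Filter ι} [l.NeBot]
    {N : WithTop ℕ∞} {f : ι → E → F} {p : ι → E → FormalMultilinearSeries 𝕜 E F}
    {q : E → FormalMultilinearSeries 𝕜 E F} (hf : ∀ i, HasFTaylorSeriesUpTo N (f i) (p i))
    (hpq : ∀ n : ℕ, n ≤ N → TendstoLocallyUniformly (fun i x => p i x n) (fun x => q x n) l) :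
    HasFTaylorSeriesUpTo N (fun x => (q x 0).curry0) q where
  zero_eq _ := rfl
  fderiv n hn x := by
    have hcurry : TendstoLocallyUniformly (fun i x => (p i x (n + 1)).curryLeft)
        (fun x => (q x (n + 1)).curryLeft) l :=
      (continuousMultilinearCurryLeftEquiv 𝕜 (fun _ : Fin (n + 1) => E) F).isometry
        |>.uniformContinuous.comp_tendstoLocallyUniformly
          (hpq (n + 1) (ENat.add_one_natCast_le_withTop_of_lt hn))
    exact hasFDerivAt_of_tendstoLocallyUniformlyOn isOpen_univ
      (tendstoLocallyUniformlyOn_univ.2 hcurry) (fun i y _ => (hf i).fderiv n hn y)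
      (fun y _ => (tendstoLocallyUniformlyOn_univ.2 (hpq n hn.le)).tendsto_at (Set.mem_univ y))
      (Set.mem_univ x)
  cont n hn := (hpq n hn).continuous (Frequently.of_forall fun i => (hf i).cont n hn)

end TaylorSeries

section SchwartzSpace

variable {E : Type*} [NormedAddCommGroup E] [NormedSpace ℝ E]
  {F : Type*} [NormedAddCommGroup F] [NormedSpace ℝ F]

/-- The `n`-th derivative of `f` weighted by the `k`-th power of the norm, so that the Schwartz
seminorm of index `(k, n)` of `f` is the supremum norm of this function. -/
noncomputable def weightedIteratedFDeriv (k n : ℕ) (f : 𝓢(E, F)) (x : E) : E [×n]→L[ℝ] F :=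
  ‖x‖ ^ k • iteratedFDeriv ℝ n f x

theorem weightedIteratedFDeriv_zero (n : ℕ) :
    weightedIteratedFDeriv 0 n = fun f : 𝓢(E, F) => iteratedFDeriv ℝ n f := by
  ext1 f
  ext1 x
  rw [weightedIteratedFDeriv, pow_zero, one_smul]

theorem norm_weightedIteratedFDeriv (k n : ℕ) (f : 𝓢(E, F)) (x : E) :
    ‖weightedIteratedFDeriv k n f x‖ = ‖x‖ ^ k * ‖iteratedFDeriv ℝ n f x‖ := by
  rw [weightedIteratedFDeriv, norm_smul, norm_pow, norm_norm]

theorem weightedIteratedFDeriv_sub (k n : ℕ) (f g : 𝓢(E, F)) (x : E) :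
    weightedIteratedFDeriv k n (f - g) x =
      weightedIteratedFDeriv k n f x - weightedIteratedFDeriv k n g x := by
  have hcoe : ⇑(f - g) = ⇑f - ⇑g := by ext y; simp
  rw [weightedIteratedFDeriv, hcoe,
    iteratedFDeriv_sub_apply (f.contDiffAt n) (g.contDiffAt n), smul_sub]
  rfl

theorem seminorm_le_iff_norm_weightedIteratedFDeriv_le (𝕜 : Type*) [NormedField 𝕜]
    [NormedSpace 𝕜 F] [SMulCommClass ℝ 𝕜 F] (k n : ℕ) (f : 𝓢(E, F)) {c : ℝ} (hc : 0 ≤ c) :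
    SchwartzMap.seminorm 𝕜 k n f ≤ c ↔ ∀ x, ‖weightedIteratedFDeriv k n f x‖ ≤ c := by
  simp only [norm_weightedIteratedFDeriv]
  exact ⟨fun h x => (SchwartzMap.le_seminorm 𝕜 k n f x).trans h,
    SchwartzMap.seminorm_le_bound 𝕜 k n f hc⟩

theorem uniformCauchySeqOn_weightedIteratedFDeriv {l : Filter 𝓢(E, F)} (hl : Cauchy l)
    (k n : ℕ) : UniformCauchySeqOn (weightedIteratedFDeriv k n) l Set.univ := by
  have hseminorm : Tendsto (fun p : 𝓢(E, F) × 𝓢(E, F) => SchwartzMap.seminorm ℝ k n (p.2 - p.1))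
      (𝓤 𝓢(E, F)) (𝓝 0) := by
    have hcont := ((schwartz_withSeminorms ℝ E F).continuous_seminorm (k, n)).tendsto 0
    rw [map_zero] at hcont
    rw [uniformity_eq_comap_nhds_zero]
    exact hcont.comp tendsto_comap
  intro s hs
  obtain ⟨ε, hε, hεs⟩ := Metric.mem_uniformity_dist.1 hs
  filter_upwards [(hseminorm.mono_left hl.2).eventually_lt_const hε] with p hp x _
  refine hεs ?_
  rw [dist_comm, dist_eq_norm, ← weightedIteratedFDeriv_sub]
  exact ((seminorm_le_iff_norm_weightedIteratedFDeriv_le ℝ k n _ (apply_nonneg _ _)).1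
    le_rfl x).trans_lt hp

theorem le_nhds_of_tendstoUniformly_weightedIteratedFDeriv {l : Filter 𝓢(E, F)} {g : 𝓢(E, F)}
    (h : ∀ k n, TendstoUniformly (weightedIteratedFDeriv k n) (weightedIteratedFDeriv k n g) l) :
    l ≤ 𝓝 g := by
  refine ((schwartz_withSeminorms ℝ E F).tendsto_nhds id g).2 fun ⟨k, n⟩ ε hε => ?_
  filter_upwards [Metric.tendstoUniformly_iff.1 (h k n) (ε / 2) (half_pos hε)] with f hf
  refine lt_of_le_of_lt ?_ (half_lt_self hε)
  refine (seminorm_le_iff_norm_weightedIteratedFDeriv_le ℝ k n _ (half_pos hε).le).2 fun x => ?_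
  rw [weightedIteratedFDeriv_sub, ← dist_eq_norm, dist_comm]
  exact (hf x).le

theorem exists_schwartzMap_of_tendstoUniformly {l : Filter 𝓢(E, F)} [l.NeBot]
    {q : E → FormalMultilinearSeries ℝ E F}
    (hq : ∀ k n, TendstoUniformly (weightedIteratedFDeriv k n) (fun x => ‖x‖ ^ k • q x n) l) :
    ∃ g : 𝓢(E, F), ∀ n x, iteratedFDeriv ℝ n g x = q x n := by
  have htaylor : HasFTaylorSeriesUpTo ((⊤ : ℕ∞) : WithTop ℕ∞) (fun x => (q x 0).curry0) q :=
    hasFTaylorSeriesUpTo_of_tendstoLocallyUniformly (l := l)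
      (fun f : 𝓢(E, F) => contDiff_iff_ftaylorSeries.1 (f.smooth ⊤)) fun n _ => by
        simpa only [weightedIteratedFDeriv_zero, ftaylorSeries, pow_zero, one_smul] using
          (hq 0 n).tendstoLocallyUniformly
  have hderiv (n : ℕ) (x : E) : q x n = iteratedFDeriv ℝ n (fun x => (q x 0).curry0) x :=
    htaylor.eq_iteratedFDeriv (by exact_mod_cast le_top) x
  refine ⟨⟨fun x => (q x 0).curry0, htaylor.contDiff, fun k n => ?_⟩, fun n x => (hderiv n x).symm⟩
  obtain ⟨f, hf⟩ := (Metric.tendstoUniformly_iff.1 (hq k n) 1 one_pos).exists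
  refine ⟨1 + SchwartzMap.seminorm ℝ k n f, fun x => ?_⟩
  calc ‖x‖ ^ k * ‖iteratedFDeriv ℝ n (fun x => (q x 0).curry0) x‖
      = ‖‖x‖ ^ k • q x n‖ := by rw [← hderiv, norm_smul, norm_pow, norm_norm]
    _ ≤ ‖‖x‖ ^ k • q x n - weightedIteratedFDeriv k n f x‖ + ‖weightedIteratedFDeriv k n f x‖ :=
      norm_le_norm_sub_add _ _
    _ ≤ 1 + SchwartzMap.seminorm ℝ k n f := by
      gcongr
      · exact (dist_eq_norm _ _).symm.trans_le (hf x).le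
      · exact (seminorm_le_iff_norm_weightedIteratedFDeriv_le ℝ k n f (apply_nonneg _ _)).1 le_rfl x

variable [CompleteSpace F]

instance instCompleteSpaceSchwartzMap : CompleteSpace 𝓢(E, F) where
  complete {l} hl := by
    have := hl.1
    have hcauchy := uniformCauchySeqOn_weightedIteratedFDeriv hl
    have hlim (x : E) (n : ℕ) :
        ∃ y, Tendsto (fun f : 𝓢(E, F) => iteratedFDeriv ℝ n f x) l (𝓝 y) := by
      simpa only [weightedIteratedFDeriv_zero, Tendsto] using
        CompleteSpace.complete ((hcauchy 0 n).cauchy_map (Set.mem_univ x))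
    choose q hq using hlim
    have hunif (k n : ℕ) :
        TendstoUniformly (weightedIteratedFDeriv k n) (fun x => ‖x‖ ^ k • q x n) l :=
      tendstoUniformlyOn_univ.1 <|
        (hcauchy k n).tendstoUniformlyOn_of_tendsto fun x _ => (hq x n).const_smul _
    obtain ⟨g, hg⟩ := exists_schwartzMap_of_tendstoUniformly hunif
    simp only [← hg] at hunif
    exact ⟨g, le_nhds_of_tendstoUniformly_weightedIteratedFDeriv hunif⟩

instance instBarrelledSpaceSchwartzMap {𝕜 : Type*} [NontriviallyNormedField 𝕜] [NormedSpace 𝕜 F]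
    [SMulCommClass ℝ 𝕜 F] : BarrelledSpace 𝕜 𝓢(E, F) :=
  have : (𝓤 𝓢(E, F)).IsCountablyGenerated := IsUniformAddGroup.uniformity_countably_generated
  inferInstance

end SchwartzSpace

section ContinuityFromEvaluations

variable {𝕜 : Type*} [RCLike 𝕜]
  {V : Type*} [AddCommGroup V] [Module 𝕜 V] [UniformSpace V] [IsUniformAddGroup V]
  [ContinuousSMul 𝕜 V] [BarrelledSpace 𝕜 V]
  {E : Type*} [NormedAddCommGroup E] [NormedSpace ℝ E]
  {F : Type*} [NormedAddCommGroup F] [NormedSpace ℝ F] [NormedSpace 𝕜 F] [SMulCommClass ℝ 𝕜 F]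

theorem continuous_lineDerivOp_apply (S : V →ₗ[𝕜] 𝓢(E, F))
    (hS : ∀ x, Continuous fun φ => S φ x) (h x : E) :
    Continuous fun φ => (∂_{h} (S φ) : 𝓢(E, F)) x := by
  let eval (y : E) : V →L[𝕜] F :=
    { toFun := fun φ => S φ y
      map_add' := by simp
      map_smul' := by simp
      cont := hS y }
  let quotient (j : ℕ) : V →L[𝕜] F := j • (eval (x + (j : ℝ)⁻¹ • h) - eval x)
  have hquotient : Tendsto (fun j φ => quotient j φ) atTop
      (𝓝 fun φ => (∂_{h} (S φ) : 𝓢(E, F)) x) := by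
    refine tendsto_pi_nhds.2 fun φ => ?_
    rw [SchwartzMap.lineDerivOp_apply_eq_fderiv]
    refine (((S φ).hasFDerivAt x).lim h (c := fun j : ℕ => (j : ℝ)) (l := atTop)
      (by simpa using tendsto_natCast_atTop_atTop)).congr fun j => ?_
    simp [quotient, eval, Nat.cast_smul_eq_nsmul]
  exact (continuousLinearMapOfTendsto quotient hquotient).continuous

theorem continuous_iteratedFDeriv_apply (S : V →ₗ[𝕜] 𝓢(E, F))
    (hS : ∀ x, Continuous fun φ => S φ x) (n : ℕ) (x : E) (h : Fin n → E) :
    Continuous fun φ => iteratedFDeriv ℝ n (S φ) x h := by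
  simp_rw [← SchwartzMap.iteratedLineDerivOp_eq_iteratedFDeriv]
  induction n generalizing x with
  | zero => simpa using hS x
  | succ n ih =>
    simp_rw [LineDeriv.iteratedLineDerivOp_succ_left]
    exact continuous_lineDerivOp_apply
      ((LineDeriv.iteratedLineDerivOpCLM 𝕜 𝓢(E, F) (Fin.tail h)).toLinearMap ∘ₗ S)
      (fun y => ih y (Fin.tail h)) (h 0) x

theorem lowerSemicontinuous_seminorm_comp (S : V →ₗ[𝕜] 𝓢(E, F))
    (hS : ∀ x, Continuous fun φ => S φ x) (k n : ℕ) :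
    LowerSemicontinuous ((SchwartzMap.seminorm 𝕜 k n).comp S) := by
  refine lowerSemicontinuous_iff_isClosed_preimage.2 fun c => ?_
  rcases lt_or_ge c 0 with hc | hc
  · have hempty : (SchwartzMap.seminorm 𝕜 k n).comp S ⁻¹' Set.Iic c = ∅ :=
      Set.eq_empty_of_forall_notMem fun φ hφ => (hφ.trans_lt hc).not_ge (apply_nonneg _ _)
    exact hempty ▸ isClosed_empty
  · have hsublevel : (SchwartzMap.seminorm 𝕜 k n).comp S ⁻¹' Set.Iic c =
        ⋂ (x : E) (h : Fin n → E),
          {φ | ‖weightedIteratedFDeriv k n (S φ) x h‖ ≤ c * ∏ i, ‖h i‖} := by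
      ext φ
      simp only [Set.mem_preimage, Seminorm.comp_apply, Set.mem_Iic, Set.mem_iInter,
        Set.mem_ofPred_eq, seminorm_le_iff_norm_weightedIteratedFDeriv_le 𝕜 k n _ hc,
        ContinuousMultilinearMap.opNorm_le_iff hc]
    rw [hsublevel]
    exact isClosed_iInter fun x => isClosed_iInter fun h => isClosed_le
      ((continuous_iteratedFDeriv_apply S hS n x h).const_smul (‖x‖ ^ k)).norm continuous_const

theorem continuous_schwartzMap_of_continuous_apply (S : V →ₗ[𝕜] 𝓢(E, F))
    (hS : ∀ x, Continuous fun φ => S φ x) : Continuous S :=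
  (schwartz_withSeminorms 𝕜 E F).continuous_of_continuous_comp S fun (k, n) =>
    Seminorm.continuous_of_lowerSemicontinuous _ (lowerSemicontinuous_seminorm_comp S hS k n)

theorem schwartzFamily_summable_general {G : Type*} [AddCommMonoid G] [Module 𝕜 G]
    [TopologicalSpace G] (v : E → (V →L[𝕜] F)) (T : V →ₗ[𝕜] 𝓢(E, F))
    (hT : ∀ φ p, T φ p = v p φ) (a : 𝓢(E, F) →L[𝕜] G) :
    Continuous fun φ => a (T φ) :=
  a.continuous.comp <| continuous_schwartzMap_of_continuous_apply T fun p => by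
    simpa only [hT] using (v p).continuous

end ContinuityFromEvaluations

/-- summability of Schwartz families: if `v` is a Schwartz family and
`T : 𝓢ₙ →ₗ 𝓢ₘ` is the operator generated by `v`, then for every tempered distribution
`a ∈ 𝓢ₘ'`, the linear functional `φ ↦ a (T φ)` is continuous, i.e. a tempered
distribution on `ℝⁿ`. -/
theorem schwartzFamily_summable {n m : ℕ}
    (v : EuclideanSpace ℝ (Fin m) → (Sch n →L[ℂ] ℂ)) (hv : IsSchwartzFamily v)
    (T : Sch n →ₗ[ℂ] Sch m) (hT : ∀ (φ : Sch n) (p : EuclideanSpace ℝ (Fin m)), T φ p = v p φ)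
    (a : Sch m →L[ℂ] ℂ) :
    Continuous fun φ : Sch n => a (T φ) := by
  exact schwartzFamily_summable_general v T hT a
end

section
/- (Continuity of the operator generated by a Schwartz family.) Let v : ℝᵐ → (𝓢ₙ →L[ℂ] ℂ) be a Schwartz family, and let T : 𝓢ₙ →ₗ[ℂ] 𝓢ₘ be a linear map such that (T φ)(p) = v(p)(φ) for all φ ∈ 𝓢ₙ and p ∈ ℝᵐ. Then T is continuous with respect to the usual Fréchet topologies of 𝓢ₙ and 𝓢ₘ. -/
/-! On a barrelled domain a pointwise limit of continuous linear maps is continuous, by the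
Banach–Steinhaus theorem. Applied to difference quotients, this makes `φ ↦ Dⁿ(T φ)(x)` continuous
for all `n` and `x` as soon as all evaluations `φ ↦ T φ p` are. Each Schwartz seminorm of `T φ` is
then a supremum over `x` of continuous functions of `φ`, that is, a lower semicontinuous seminorm on
a barrelled space, and is therefore continuous. For complete `F` the space `𝓢(E, F)` is itself
barrelled, being Baire as a complete metrizable space. -/

open Filter Topology Uniformity SchwartzMap
open scoped ContDiff

section UniformLimits

variable {𝕜 ι E F : Type*} [RCLike 𝕜] [NormedAddCommGroup E] [NormedSpace 𝕜 E]
  [NormedAddCommGroup F] [NormedSpace 𝕜 F]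

theorem hasFTaylorSeriesUpTo_of_tendstoUniformly {l : Filter ι} [l.NeBot] {N : WithTop ℕ∞}
    {f : ι → E → F} {P : ι → E → FormalMultilinearSeries 𝕜 E F}
    {p : E → FormalMultilinearSeries 𝕜 E F} (hP : ∀ i, HasFTaylorSeriesUpTo N (f i) (P i))
    (hp : ∀ m : ℕ, m ≤ N → TendstoUniformly (fun i x => P i x m) (fun x => p x m) l) :
    HasFTaylorSeriesUpTo N (fun x => (p x 0).curry0) p where
  zero_eq _ := rfl
  fderiv m hm x := by
    have hcurry : TendstoUniformly (fun i y => (P i y (m + 1)).curryLeft)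
        (fun y => (p y (m + 1)).curryLeft) l :=
      (continuousMultilinearCurryLeftEquiv 𝕜 (fun _ : Fin (m + 1) => E) F).isometry
        |>.uniformContinuous.comp_tendstoUniformly
        (hp (m + 1) (ENat.add_one_natCast_le_withTop_of_lt hm))
    exact hasFDerivAt_of_tendstoUniformly hcurry (fun i => (hP i).fderiv m hm)
      (fun y => (hp m hm.le).tendsto_at y) x
  cont m hm := (hp m hm).continuous (Frequently.of_forall fun i => (hP i).cont m hm)

end UniformLimits

section Completeness

variable {E F : Type*} [NormedAddCommGroup E] [NormedSpace ℝ E]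
  [NormedAddCommGroup F] [NormedSpace ℝ F]

theorem uniformContinuous_iteratedFDeriv_apply (n : ℕ) (x : E) :
    UniformContinuous fun f : 𝓢(E, F) => iteratedFDeriv ℝ n f x :=
  (SchwartzMap.mkCLMtoNormedSpace (𝕜 := ℝ) (σ := RingHom.id ℝ)
    (fun f : 𝓢(E, F) => iteratedFDeriv ℝ n f x)
    (fun f g => iteratedFDeriv_add_apply (f.smooth n).contDiffAt (g.smooth n).contDiffAt)
    (fun _ f => iteratedFDeriv_const_smul_apply (f.smooth n).contDiffAt)
    ⟨{(0, n)}, 1, zero_le_one, fun f => by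
      simpa using SchwartzMap.norm_iteratedFDeriv_le_seminorm ℝ f n x⟩).uniformContinuous

variable {𝓕 : Filter 𝓢(E, F)}

theorem eventually_eventually_seminorm_sub_lt_of_cauchy (h𝓕 : Cauchy 𝓕) (k n : ℕ) {ε : ℝ}
    (hε : 0 < ε) :
    ∀ᶠ f in 𝓕, ∀ᶠ g in 𝓕, SchwartzMap.seminorm ℝ k n (g - f) < ε := by
  have hsub : Tendsto (fun fg : 𝓢(E, F) × 𝓢(E, F) => fg.2 - fg.1) (𝓤 𝓢(E, F)) (𝓝 0) := by
    rw [uniformity_eq_comap_nhds_zero]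
    exact tendsto_comap
  have hsmall : ∀ᶠ f in 𝓝 (0 : 𝓢(E, F)), SchwartzMap.seminorm ℝ k n f < ε :=
    ((schwartz_withSeminorms ℝ E F).continuous_seminorm (k, n)).tendsto' 0 0 (map_zero _)
      |>.eventually (gt_mem_nhds hε)
  have hpairs : ∀ᶠ fg in 𝓕 ×ˢ 𝓕, SchwartzMap.seminorm ℝ k n (fg.2 - fg.1) < ε :=
    h𝓕.2 (hsub.eventually hsmall)
  exact hpairs.curry

variable {n : ℕ} {G : E → E [×n]→L[ℝ] F}

theorem eventually_pow_mul_norm_iteratedFDeriv_sub_le_of_cauchy (h𝓕 : Cauchy 𝓕)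
    (hG : ∀ x, Tendsto (fun f : 𝓢(E, F) => iteratedFDeriv ℝ n f x) 𝓕 (𝓝 (G x)))
    (k : ℕ) {ε : ℝ} (hε : 0 < ε) :
    ∀ᶠ f : 𝓢(E, F) in 𝓕, ∀ x, ‖x‖ ^ k * ‖iteratedFDeriv ℝ n f x - G x‖ ≤ ε := by
  have := h𝓕.1
  filter_upwards [eventually_eventually_seminorm_sub_lt_of_cauchy h𝓕 k n hε] with f hf x
  have hlim : Tendsto (fun g : 𝓢(E, F) =>
      ‖x‖ ^ k * ‖iteratedFDeriv ℝ n f x - iteratedFDeriv ℝ n g x‖) 𝓕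
      (𝓝 (‖x‖ ^ k * ‖iteratedFDeriv ℝ n f x - G x‖)) :=
    ((tendsto_const_nhds.sub (hG x)).norm).const_mul _
  refine le_of_tendsto hlim ?_
  filter_upwards [hf] with g hg
  rw [norm_sub_rev, ← iteratedFDeriv_sub_apply (g.smooth n).contDiffAt (f.smooth n).contDiffAt]
  exact (SchwartzMap.le_seminorm ℝ k n (g - f) x).trans hg.le

theorem tendstoUniformly_iteratedFDeriv_of_cauchy (h𝓕 : Cauchy 𝓕)
    (hG : ∀ x, Tendsto (fun f : 𝓢(E, F) => iteratedFDeriv ℝ n f x) 𝓕 (𝓝 (G x))) :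
    TendstoUniformly (fun f : 𝓢(E, F) => iteratedFDeriv ℝ n f) G 𝓕 := by
  rw [Metric.tendstoUniformly_iff]
  intro ε hε
  filter_upwards [eventually_pow_mul_norm_iteratedFDeriv_sub_le_of_cauchy h𝓕 hG 0 (half_pos hε)]
    with f hf x
  rw [dist_comm, dist_eq_norm]
  simpa only [pow_zero, one_mul] using (hf x).trans_lt (half_lt_self hε)

theorem exists_tendsto_iteratedFDeriv_of_cauchy [CompleteSpace F] (h𝓕 : Cauchy 𝓕) :
    ∃ g : 𝓢(E, F), ∀ n x,
      Tendsto (fun f : 𝓢(E, F) => iteratedFDeriv ℝ n f x) 𝓕 (𝓝 (iteratedFDeriv ℝ n g x)) := by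
  have := h𝓕.1
  choose p hp using fun x n =>
    CompleteSpace.complete (h𝓕.map (uniformContinuous_iteratedFDeriv_apply n x))
  have htaylor : HasFTaylorSeriesUpTo ∞ (fun x => (p x 0).curry0) p :=
    hasFTaylorSeriesUpTo_of_tendstoUniformly
      (fun f : 𝓢(E, F) => (f.smooth ⊤).ftaylorSeries)
      fun n _ => tendstoUniformly_iteratedFDeriv_of_cauchy h𝓕 fun x => hp x n
  have hderiv (n : ℕ) (x : E) : p x n = iteratedFDeriv ℝ n (fun x => (p x 0).curry0) x :=
    htaylor.eq_iteratedFDeriv (mod_cast le_top) x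
  refine ⟨⟨_, htaylor.contDiff, fun k n => ?_⟩, fun n x => hderiv n x ▸ hp x n⟩
  obtain ⟨f, hf⟩ :=
    (eventually_pow_mul_norm_iteratedFDeriv_sub_le_of_cauchy h𝓕 (fun x => hp x n) k one_pos).exists
  refine ⟨SchwartzMap.seminorm ℝ k n f + 1, fun x => ?_⟩
  rw [← hderiv]
  calc ‖x‖ ^ k * ‖p x n‖
    _ ≤ ‖x‖ ^ k * (‖iteratedFDeriv ℝ n f x‖ + ‖iteratedFDeriv ℝ n f x - p x n‖) := by
      gcongr
      exact norm_le_norm_add_norm_sub _ _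
    _ = ‖x‖ ^ k * ‖iteratedFDeriv ℝ n f x‖ + ‖x‖ ^ k * ‖iteratedFDeriv ℝ n f x - p x n‖ :=
      mul_add _ _ _
    _ ≤ SchwartzMap.seminorm ℝ k n f + 1 :=
      add_le_add (SchwartzMap.le_seminorm ℝ k n f x) (hf x)

instance completeSpace_schwartzMap [CompleteSpace F] : CompleteSpace 𝓢(E, F) where
  complete {𝓕} h𝓕 := by
    obtain ⟨g, hg⟩ := exists_tendsto_iteratedFDeriv_of_cauchy h𝓕
    refine ⟨g, ((schwartz_withSeminorms ℝ E F).tendsto_nhds id g).2 fun ⟨k, n⟩ ε hε => ?_⟩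
    filter_upwards
      [eventually_pow_mul_norm_iteratedFDeriv_sub_le_of_cauchy h𝓕 (hg n) k (half_pos hε)] with f hf
    refine (SchwartzMap.seminorm_le_bound ℝ k n (f - g) (half_pos hε).le fun x => ?_).trans_lt
      (half_lt_self hε)
    have hsub : iteratedFDeriv ℝ n (f - g : 𝓢(E, F)) x =
        iteratedFDeriv ℝ n f x - iteratedFDeriv ℝ n g x :=
      iteratedFDeriv_sub_apply (f.smooth n).contDiffAt (g.smooth n).contDiffAt
    rw [hsub]
    exact hf x

instance barrelledSpace_schwartzMap {𝕜 : Type*} [NontriviallyNormedField 𝕜] [NormedSpace 𝕜 F]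
    [SMulCommClass ℝ 𝕜 F] [CompleteSpace F] : BarrelledSpace 𝕜 𝓢(E, F) :=
  haveI : (𝓤 𝓢(E, F)).IsCountablyGenerated := IsUniformAddGroup.uniformity_countably_generated
  inferInstance

end Completeness

section Barrelled

theorem continuous_seminorm_of_isLUB {𝕜 X ι : Type*} [SeminormedRing 𝕜] [AddGroup X] [SMul 𝕜 X]
    [TopologicalSpace X] [BarrelledSpace 𝕜 X] {p : Seminorm 𝕜 X} {q : ι → X → ℝ}
    (hq : ∀ i, Continuous (q i)) (hp : ∀ φ, IsLUB (Set.range fun i => q i φ) (p φ)) :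
    Continuous p := by
  refine p.continuous_of_lowerSemicontinuous fun φ r hr => ?_
  obtain ⟨_, ⟨i, rfl⟩, hi⟩ := (lt_isLUB_iff (hp φ)).1 hr
  filter_upwards [(hq i).continuousAt.eventually (lt_mem_nhds hi)] with ψ hψ
  exact hψ.trans_le ((hp ψ).1 ⟨i, rfl⟩)

variable {𝕜 X E F : Type*} [NontriviallyNormedField 𝕜]
  [AddCommGroup X] [Module 𝕜 X]
  [NormedAddCommGroup E] [NormedSpace ℝ E]
  [NormedAddCommGroup F] [NormedSpace ℝ F] [NormedSpace 𝕜 F] [SMulCommClass ℝ 𝕜 F]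

theorem continuous_of_forall_continuous_clm_apply [TopologicalSpace X] [IsTopologicalAddGroup X]
    [BarrelledSpace 𝕜 X] (L : X →ₗ[𝕜] E →L[ℝ] F)
    (hL : ∀ e, Continuous fun φ => L φ e) : Continuous L := by
  refine (norm_withSeminorms 𝕜 (E →L[ℝ] F)).continuous_of_continuous_comp L fun _ =>
    continuous_seminorm_of_isLUB (q := fun (e : Metric.closedBall (0 : E) 1) φ => ‖L φ e‖)
      (fun e => (hL e).norm) fun φ => ⟨?_, fun M hM => ?_⟩
  · rintro _ ⟨e, rfl⟩
    exact (L φ).unit_le_opNorm e (mem_closedBall_zero_iff.1 e.2)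
  · have hM' (e : E) (he : ‖e‖ ≤ 1) : ‖L φ e‖ ≤ M :=
      hM ⟨⟨e, mem_closedBall_zero_iff.2 he⟩, rfl⟩
    exact ContinuousLinearMap.opNorm_le_of_unit_norm ((norm_nonneg _).trans (hM' 0 (by simp)))
      fun e he => hM' e he.le

variable [UniformSpace X] [IsUniformAddGroup X] [ContinuousSMul 𝕜 X] [BarrelledSpace 𝕜 X]

theorem continuous_lineDeriv_apply {V : Type*} [AddCommGroup V] [Module ℝ V]
    {A : V → X →L[𝕜] F} {x e : V}
    (hA : ∀ φ, LineDifferentiableAt ℝ (fun y => A y φ) x e) :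
    Continuous fun φ => lineDeriv ℝ (fun y => A y φ) x e := by
  have := SMulCommClass.symm ℝ 𝕜 F
  have hslope : Tendsto (fun (t : ℝ) φ => (t⁻¹ • (A (x + t • e) - A x)) φ) (𝓝[≠] 0)
      (𝓝 fun φ => lineDeriv ℝ (fun y => A y φ) x e) :=
    tendsto_pi_nhds.2 fun φ => (hA φ).hasLineDerivAt.tendsto_slope_zero
  exact (continuousLinearMapOfTendsto _ hslope).continuous

theorem continuous_fderiv_apply {A : E → X →L[𝕜] F} {x : E}
    (hA : ∀ φ, DifferentiableAt ℝ (fun y => A y φ) x) :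
    Continuous fun φ => fderiv ℝ (fun y => A y φ) x := by
  let L : X →ₗ[𝕜] E →L[ℝ] F :=
    { toFun φ := fderiv ℝ (fun y => A y φ) x
      map_add' φ ψ := by simpa only [map_add] using fderiv_fun_add (hA φ) (hA ψ)
      map_smul' c φ := by
        simpa only [map_smul, RingHom.id_apply] using fderiv_fun_const_smul (hA φ) c }
  refine continuous_of_forall_continuous_clm_apply L fun e => ?_
  exact (continuous_lineDeriv_apply fun φ => (hA φ).lineDifferentiableAt).congr
    fun φ => (hA φ).lineDeriv_eq_fderiv

theorem continuous_iteratedFDeriv_apply_s4 {A : E → X →L[𝕜] F} {n : ℕ}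
    (hA : ∀ φ, ContDiff ℝ n fun y => A y φ) (x : E) :
    Continuous fun φ => iteratedFDeriv ℝ n (fun y => A y φ) x := by
  induction n generalizing x with
  | zero =>
    exact (continuousMultilinearCurryFin0 ℝ E F).symm.continuous.comp (A x).continuous
  | succ n ih =>
    have hA' (φ : X) : ContDiff ℝ n fun y => A y φ := (hA φ).of_succ
    let D (y : E) : X →L[𝕜] E [×n]→L[ℝ] F :=
      { toFun φ := iteratedFDeriv ℝ n (fun y => A y φ) y
        map_add' φ ψ := by
          simpa only [map_add] using
            fun_iteratedFDeriv_add_apply (hA' φ).contDiffAt (hA' ψ).contDiffAt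
        map_smul' c φ := by
          simpa only [map_smul, RingHom.id_apply] using
            iteratedFDeriv_const_smul_apply' (hA' φ).contDiffAt
        cont := ih hA' y }
    have hD (φ : X) : DifferentiableAt ℝ (fun y => D y φ) x :=
      (hA φ).differentiable_iteratedFDeriv (mod_cast n.lt_succ_self) x
    exact (continuousMultilinearCurryLeftEquiv ℝ (fun _ : Fin (n + 1) => E) F).symm.continuous.comp
      (continuous_fderiv_apply hD)

theorem continuous_operator_of_schwartzFamily_general (v : E → X →L[𝕜] F) (T : X →ₗ[𝕜] 𝓢(E, F))
    (hT : ∀ φ p, T φ p = v p φ) : Continuous T := by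
  have hTv (φ : X) : ⇑(T φ) = fun p => v p φ := funext (hT φ)
  have hderiv (n : ℕ) (x : E) : Continuous fun φ => iteratedFDeriv ℝ n (T φ) x := by
    simpa only [hTv] using continuous_iteratedFDeriv_apply_s4 (fun φ => hTv φ ▸ (T φ).smooth n) x
  refine (schwartz_withSeminorms 𝕜 E F).continuous_of_continuous_comp T fun ⟨k, n⟩ =>
    continuous_seminorm_of_isLUB (q := fun x φ => ‖x‖ ^ k * ‖iteratedFDeriv ℝ n (T φ) x‖)
      (fun x => (hderiv n x).norm.const_mul _) fun φ => ⟨?_, fun M hM => ?_⟩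
  · rintro _ ⟨x, rfl⟩
    exact SchwartzMap.le_seminorm 𝕜 k n (T φ) x
  · have hM' (x : E) : ‖x‖ ^ k * ‖iteratedFDeriv ℝ n (T φ) x‖ ≤ M := hM ⟨x, rfl⟩
    exact SchwartzMap.seminorm_le_bound 𝕜 k n (T φ) (le_trans (by positivity) (hM' 0)) hM'

end Barrelled

/-- the operator generated by a Schwartz family is continuous with respect to
the usual Fréchet topologies of `𝓢ₙ` and `𝓢ₘ`. -/
theorem continuous_operator_of_schwartzFamily {n m : ℕ}
    (v : EuclideanSpace ℝ (Fin m) → (Sch n →L[ℂ] ℂ)) (hv : IsSchwartzFamily v)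
    (T : Sch n →ₗ[ℂ] Sch m) (hT : ∀ (φ : Sch n) (p : EuclideanSpace ℝ (Fin m)), T φ p = v p φ) :
    Continuous T :=
  continuous_operator_of_schwartzFamily_general v T hT
end

section
/- (Characterization of summability, equivalence (2)⇔(4).) Let T : 𝓢ₙ →ₗ[ℂ] 𝓢ₘ be a linear map between Schwartz spaces. Then T is topologically transposable — i.e., for every continuous linear functional a : 𝓢ₘ →L[ℂ] ℂ the composition φ ↦ a(T φ) is a continuous linear functional on 𝓢ₙ — if and only if T is continuous with respect to the usual Fréchet topologies of 𝓢ₙ and 𝓢ₘ. -/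
/-!
A first-countable domain is bornological: a linear map out of it is continuous as soon as it sends
bounded sets to bounded sets. If every functional of the codomain becomes continuous after
composition with `T`, then `T` sends bounded sets to weakly bounded sets, and in a locally convex
space these are bounded (Mackey). The latter is checked one continuous seminorm `p` at a time: the
uniform boundedness principle on the Banach space dual to `p`, whose elements act on a point `x`
with norm `p x` by Hahn–Banach, bounds `p` on the set.
-/

open Bornology Set
open scoped NNReal

variable {𝕜 E F : Type*} [RCLike 𝕜]

theorem isBounded_of_forall_dual_image [SeminormedAddCommGroup E] [NormedSpace 𝕜 E] {s : Set E}
    (h : ∀ f : StrongDual 𝕜 E, IsBounded (f '' s)) : IsBounded s := by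
  have pointwise : ∀ f : StrongDual 𝕜 E,
      ∃ C, ∀ x : s, ‖NormedSpace.inclusionInDoubleDual 𝕜 E x f‖ ≤ C := fun f ↦ by
    simpa only [NormedSpace.dual_def, Subtype.forall, forall_mem_image]
      using (h f).exists_norm_le
  obtain ⟨C, hC⟩ := banach_steinhaus pointwise
  refine isBounded_iff_forall_norm_le.mpr ⟨C, fun x hx ↦ ?_⟩
  calc ‖x‖ = ‖NormedSpace.inclusionInDoubleDual 𝕜 E x‖ :=
        ((NormedSpace.inclusionInDoubleDualLi 𝕜).norm_map x).symm
    _ ≤ C := hC ⟨x, hx⟩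

theorem bddAbove_seminorm_image_of_forall_dominated [AddCommGroup E] [Module 𝕜 E]
    (p : Seminorm 𝕜 E) {s : Set E}
    (h : ∀ (f : E →ₗ[𝕜] 𝕜) (C : ℝ≥0), (normSeminorm 𝕜 𝕜).comp f ≤ C • p → IsBounded (f '' s)) :
    BddAbove (p '' s) := by
  let : SeminormedAddCommGroup E := p.toSeminormedAddCommGroup
  let : NormedSpace 𝕜 E := ⟨fun c x ↦ (map_smul_eq_mul p c x).le⟩
  have bounded : IsBounded s :=
    isBounded_of_forall_dual_image fun f : StrongDual 𝕜 E ↦ h f ‖f‖₊ f.le_opNorm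
  obtain ⟨C, hC⟩ := bounded.exists_norm_le
  exact ⟨C, forall_mem_image.mpr hC⟩

theorem isVonNBounded_of_forall_dual_image [AddCommGroup E] [Module 𝕜 E] [TopologicalSpace E]
    [PolynormableSpace 𝕜 E] {s : Set E}
    (h : ∀ f : StrongDual 𝕜 E, IsVonNBounded 𝕜 (f '' s)) : IsVonNBounded 𝕜 s := by
  have hE := PolynormableSpace.withSeminorms 𝕜 E
  refine hE.isVonNBounded_iff_seminorm_bddAbove.mpr fun p ↦
    bddAbove_seminorm_image_of_forall_dominated p.1 fun f C hf ↦ ?_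
  have continuous_f : Continuous f :=
    hE.continuous_normedSpace_rng 𝕜 f ⟨{p}, C, by simpa only [Finset.sup_singleton] using hf⟩
  exact (NormedSpace.isVonNBounded_iff 𝕜).mp (h ⟨f, continuous_f⟩)

theorem transposable_iff_continuous_general
    [AddCommGroup E] [Module 𝕜 E] [TopologicalSpace E] [IsTopologicalAddGroup E]
    [ContinuousSMul 𝕜 E] [FirstCountableTopology E]
    [AddCommGroup F] [Module 𝕜 F] [TopologicalSpace F] [PolynormableSpace 𝕜 F] (T : E →ₗ[𝕜] F) :
    (∀ a : StrongDual 𝕜 F, Continuous fun x ↦ a (T x)) ↔ Continuous T := by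
  refine ⟨fun transposable ↦ ?_, fun hT a ↦ a.continuous.comp hT⟩
  have : IsTopologicalAddGroup F := (PolynormableSpace.withSeminorms 𝕜 F).topologicalAddGroup
  refine T.continuous_of_locally_bounded fun s hs ↦ isVonNBounded_of_forall_dual_image fun a ↦ ?_
  let aT : StrongDual 𝕜 E := ⟨a.toLinearMap ∘ₗ T, transposable a⟩
  have bounded : IsVonNBounded 𝕜 (aT '' s) := hs.image aT
  rwa [image_image]

/-- characterization of summability, (2) ⇔ (4): a linear map `T : 𝓢ₙ → 𝓢ₘ`
is topologically transposable (i.e. `a ∘ T` is continuous for every tempered distribution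
`a ∈ 𝓢ₘ'`) if and only if `T` is continuous with respect to the Fréchet topologies. -/
theorem transposable_iff_continuous {n m : ℕ} (T : Sch n →ₗ[ℂ] Sch m) :
    (∀ a : Sch m →L[ℂ] ℂ, Continuous fun φ : Sch n => a (T φ)) ↔ Continuous T := by
  have : PolynormableSpace ℂ (Sch m) := (schwartz_withSeminorms ℂ _ ℂ).toPolynormableSpace
  exact transposable_iff_continuous_general T
end
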